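/- Every continuous function f : ℝ → ℝ satisfying the arctan equation f(x) + f(y) = f((x + y)/(1 − x·y)) for all x, y ∈ ℝ with x·y ≠ 1 is identically zero: f(x) = 0 for every x ∈ ℝ. -/

import Mathlib

/-!
Composing with the tangent turns the equation into additivity of `F = f ∘ tan` on `ℝ`. A measurable
additive map is continuous, hence linear, and `F π = f 0 = 0` then forces `F = 0`.

The poles of `tan` cost nothing: the equation forces `f x⁻¹ = -f x`, which is what additivity of `F`
needs there once `f` is given the value `0 = f 0` at infinity, and Mathlib's conventions `x / 0 = 0`
and `tan (π / 2) = 0` supply exactly that value.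
-/

open Real

/-- The arctan equation for `f`, over an arbitrary field and with values in an arbitrary additive
group: `f` is additive for the partial operation `(x + y) / (1 - x * y)`, the addition law of the
tangent. Nothing is required where that operation is undefined, that is, where `x * y = 1`. -/
def SatisfiesArctanEquation {K G : Type*} [Field K] [Add G] (f : K → G) : Prop :=
  ∀ x y : K, x * y ≠ 1 → f x + f y = f ((x + y) / (1 - x * y))

namespace SatisfiesArctanEquation

section LinearOrderedField

variable {K G : Type*} [Field K]

lemma map_zero [AddGroup G] {f : K → G} (hf : SatisfiesArctanEquation f) : f 0 = 0 := by
  simpa using hf 0 0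

variable [LinearOrder K] [IsStrictOrderedRing K]

lemma map_neg [AddGroup G] {f : K → G} (hf : SatisfiesArctanEquation f) (x : K) :
    f (-x) = -f x := by
  have hx : x * -x ≠ 1 := by nlinarith [mul_self_nonneg x]
  refine eq_neg_of_add_eq_zero_right ?_
  rw [hf x (-x) hx, add_neg_cancel, zero_div, hf.map_zero]

variable [AddCommGroup G] [IsAddTorsionFree G] {f : K → G}

lemma map_inv_of_sq_ne_one (hf : SatisfiesArctanEquation f) {x : K} (hx : x ^ 2 ≠ 1) :
    f x⁻¹ = -f x := by
  rcases eq_or_ne x 0 with rfl | hx₀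
  · simp only [inv_zero, hf.map_zero, neg_zero]
  have hsub : x ^ 2 - 1 ≠ 0 := sub_ne_zero.mpr hx
  have two_mul_inv : (x⁻¹ + x⁻¹) / (1 - x⁻¹ * x⁻¹) = -((x + x) / (1 - x * x)) := by
    have : 1 - x⁻¹ * x⁻¹ = (x ^ 2 - 1) / x ^ 2 := by field_simp
    rw [this]
    field_simp
    ring
  have double : f x + f x = f ((x + x) / (1 - x * x)) := hf x x (by rwa [← sq])
  have double_inv : f x⁻¹ + f x⁻¹ = -f ((x + x) / (1 - x * x)) := by
    rw [hf x⁻¹ x⁻¹ (by rwa [← sq, inv_pow, Ne, inv_eq_one]), two_mul_inv, hf.map_neg]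
  refine eq_neg_of_add_eq_zero_right (two_nsmul_eq_zero.mp ?_)
  rw [two_nsmul, add_add_add_comm, double, double_inv, add_neg_cancel]

lemma map_one (hf : SatisfiesArctanEquation f) : f 1 = 0 := by
  have map_three : f 1 + f 2⁻¹ = f 3 := by
    convert hf 1 2⁻¹ (by norm_num) using 2
    norm_num
  have map_third : f 1 - f 2⁻¹ = f 3⁻¹ := by
    rw [sub_eq_add_neg, ← hf.map_neg]
    convert hf 1 (-2⁻¹) (by norm_num) using 2
    norm_num
  refine two_nsmul_eq_zero.mp ?_
  calc 2 • f 1 = (f 1 + f 2⁻¹) + (f 1 - f 2⁻¹) := by abel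
    _ = 0 := by
      rw [map_three, map_third, hf.map_inv_of_sq_ne_one (by norm_num), add_neg_cancel]

lemma map_inv (hf : SatisfiesArctanEquation f) (x : K) : f x⁻¹ = -f x := by
  by_cases hx : x ^ 2 = 1
  · rcases sq_eq_one_iff.mp hx with rfl | rfl
    · simp only [inv_one, hf.map_one, neg_zero]
    · simp only [inv_neg, inv_one, hf.map_neg, hf.map_one, neg_zero]
  · exact hf.map_inv_of_sq_ne_one hx

/-- When `x * y = 1` the right-hand side is `f (_ / 0) = f 0 = 0`. -/
lemma apply_add_apply (hf : SatisfiesArctanEquation f) (x y : K) :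
    f x + f y = f ((x + y) / (1 - x * y)) := by
  by_cases hxy : x * y = 1
  · rw [hxy, sub_self, div_zero, hf.map_zero, eq_inv_of_mul_eq_one_right hxy, hf.map_inv,
      add_neg_cancel]
  · exact hf x y hxy

end LinearOrderedField

end SatisfiesArctanEquation

lemma tan_add_of_cos_ne_zero {θ φ : ℝ} (hθ : cos θ ≠ 0) (hφ : cos φ ≠ 0) :
    tan (θ + φ) = (tan θ + tan φ) / (1 - tan θ * tan φ) :=
  tan_add' ⟨cos_ne_zero_iff.mp hθ, cos_ne_zero_iff.mp hφ⟩

lemma tan_add_of_cos_eq_zero {θ : ℝ} (hθ : cos θ = 0) (φ : ℝ) :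
    tan (θ + φ) = -(tan φ)⁻¹ := by
  have hsin : sin θ ≠ 0 := fun h ↦ by simpa [h, hθ] using sin_sq_add_cos_sq θ
  rw [tan_eq_sin_div_cos, tan_eq_sin_div_cos, sin_add, cos_add, hθ, zero_mul, zero_mul, add_zero,
    zero_sub, div_neg, mul_div_mul_left _ _ hsin, inv_div]

lemma measurable_tan : Measurable tan := by
  simpa only [← tan_eq_sin_div_cos] using measurable_sin.fun_div measurable_cos

lemma addMonoidHom_eq_zero_of_continuous {E : Type*} [AddCommGroup E] [Module ℝ E]
    [TopologicalSpace E] [ContinuousSMul ℝ E] [T2Space E] {F : ℝ →+ E} (hF : Continuous F) {a : ℝ}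
    (ha : a ≠ 0) (hFa : F a = 0) : F = 0 := by
  refine AddMonoidHom.ext fun x ↦ ?_
  calc F x = F ((x / a) • a) := by rw [smul_eq_mul, div_mul_cancel₀ x ha]
    _ = (x / a) • F a := map_real_smul F hF (x / a) a
    _ = 0 := by rw [hFa, smul_zero]

namespace SatisfiesArctanEquation

section CompTan

variable {G : Type*} [AddCommGroup G] [IsAddTorsionFree G] {f : ℝ → G}

lemma map_tan_add_of_cos_eq_zero (hf : SatisfiesArctanEquation f) {θ : ℝ} (hθ : cos θ = 0)
    (φ : ℝ) : f (tan (θ + φ)) = f (tan θ) + f (tan φ) := by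
  rw [tan_add_of_cos_eq_zero hθ, tan_eq_zero_of_cos_eq_zero hθ, hf.map_neg, hf.map_inv, neg_neg,
    hf.map_zero, zero_add]

lemma map_tan_add (hf : SatisfiesArctanEquation f) (θ φ : ℝ) :
    f (tan (θ + φ)) = f (tan θ) + f (tan φ) := by
  by_cases hθ : cos θ = 0
  · exact hf.map_tan_add_of_cos_eq_zero hθ φ
  by_cases hφ : cos φ = 0
  · rw [add_comm θ, hf.map_tan_add_of_cos_eq_zero hφ, add_comm]
  · rw [tan_add_of_cos_ne_zero hθ hφ, hf.apply_add_apply]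

/-- The additive map `f ∘ tan` attached to a solution `f` of the arctan equation, through which
results on additive maps `ℝ → G` apply to `f`. At the poles of `tan` its value is `f 0 = 0`. -/
noncomputable def compTan (hf : SatisfiesArctanEquation f) : ℝ →+ G :=
  AddMonoidHom.mk' (fun θ ↦ f (tan θ)) hf.map_tan_add

lemma compTan_apply (hf : SatisfiesArctanEquation f) (θ : ℝ) : hf.compTan θ = f (tan θ) := rfl

end CompTan

end SatisfiesArctanEquation

theorem arctan_equation_continuous_solution_zero_general {E : Type*} [NormedAddCommGroup E]
    [NormedSpace ℝ E] [MeasurableSpace E] [OpensMeasurableSpace E] {f : ℝ → E}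
    (hf : Measurable f) (hfe : SatisfiesArctanEquation f) (x : ℝ) : f x = 0 := by
  have : IsAddTorsionFree E := .of_isTorsionFree ℝ E
  have hcont : Continuous hfe.compTan :=
    MeasureTheory.Measure.AddMonoidHom.continuous_of_measurable _ (hf.comp measurable_tan)
  have hpi : hfe.compTan π = 0 := by rw [hfe.compTan_apply, tan_pi, hfe.map_zero]
  have hzero : hfe.compTan = 0 := addMonoidHom_eq_zero_of_continuous hcont pi_ne_zero hpi
  rw [← tan_arctan x, ← hfe.compTan_apply, hzero, AddMonoidHom.zero_apply]

theorem arctan_equation_continuous_solution_zero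
    (f : ℝ → ℝ) (hf : Continuous f)
    (hfe : ∀ x y : ℝ, x * y ≠ 1 → f x + f y = f ((x + y) / (1 - x * y))) :
    ∀ x : ℝ, f x = 0 :=
  arctan_equation_continuous_solution_zero_general hf.measurable hfe
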